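/- arXiv:2601.17338 — 3 statements merged into one kernel-verified Lean document; each statement's English description precedes it below -/
import Mathlib

section
/- Let ω ∈ ℂ be a primitive cube root of unity. Let a₁, a₃, ξ ∈ ℂ satisfy a₃ ≠ 0, a₁³ ≠ 27a₃, ξ ≠ 0, a₁ξ + 3a₃ ≠ 0, and 3ξ³ + a₁²ξ² + 3a₁a₃ξ + 3a₃² = 0. Set d = 3a₁ξ/(a₁ξ + 3a₃) and let M be the 3×3 complex matrix with rows (ωa₁, 2ω+1, (ω−1)a₃), (−(ω+1)a₁, −(2ω+1), (−ω−2)a₃), (a₁ + 3a₃/ξ, 0, 0). Then M is invertible, and for every (X, Y, Z) ∈ ℂ³ with Y²Z + a₁XYZ + a₃YZ² = X³, the triple (X', Y', Z') = M·(X, Y, Z) satisfies X'³ + Y'³ + Z'³ = d·X'Y'Z'. -/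
open Matrix

/-!
Write `(U, V, W)` for the image of `(X, Y, Z)` and `c = a₁ + 3a₃/ξ`, so that `W = cX` and
`d * c = 3a₁`. The division polynomial equation says exactly that `c³ = a₁³ - 27a₃`, so the Hessian
equation becomes `U³ + V³ + (a₁X)³ - 3UV(a₁X) = 27a₃X³`. The left side splits over `ℚ(ω)` into three
linear factors (`sum_cubes_factor`), which evaluate to `-3a₃Z`, `-3ω²Y` and `3ω(Y + a₁X + a₃Z)`;
their product is `27a₃` times the left side of the Weierstrass equation. Invertibility follows from
`det M = -3(2ω + 1)a₃c` and `(2ω + 1)² = -3`.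
-/

theorem sum_cubes_factor {ω : ℂ} (hw : ω ^ 2 + ω + 1 = 0) (U V W : ℂ) :
    U ^ 3 + V ^ 3 + W ^ 3 - 3 * U * V * W =
      (U + V + W) * (U + ω * V + ω ^ 2 * W) * (U + ω ^ 2 * V + ω * W) := by
  grind

/-- The linear change of coordinates `M` takes the Weierstrass cubic
`Y²Z + a₁XYZ + a₃YZ² = X³` to the Hessian cubic `X³ + Y³ + Z³ = dXYZ` with
`d = 3a₁ξ/(a₁ξ + 3a₃)`, where `ξ` is a nonzero root of the 3rd division polynomial
divided by the variable; moreover `M` is invertible. -/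
theorem weierstrass_to_hessian (ω a₁ a₃ ξ : ℂ) (hω : IsPrimitiveRoot ω 3)
    (ha₃ : a₃ ≠ 0) (hΔ : a₁ ^ 3 ≠ 27 * a₃) (hξ : ξ ≠ 0) (hden : a₁ * ξ + 3 * a₃ ≠ 0)
    (hdiv : 3 * ξ ^ 3 + a₁ ^ 2 * ξ ^ 2 + 3 * a₁ * a₃ * ξ + 3 * a₃ ^ 2 = 0) :
    let d : ℂ := 3 * a₁ * ξ / (a₁ * ξ + 3 * a₃)
    let M : Matrix (Fin 3) (Fin 3) ℂ :=
      !![ω * a₁, 2 * ω + 1, (ω - 1) * a₃;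
         -(ω + 1) * a₁, -(2 * ω + 1), (-ω - 2) * a₃;
         a₁ + 3 * a₃ / ξ, 0, 0]
    IsUnit M ∧
      ∀ X Y Z : ℂ, Y ^ 2 * Z + a₁ * (X * Y * Z) + a₃ * (Y * Z ^ 2) = X ^ 3 →
        (M.mulVec ![X, Y, Z] 0) ^ 3 + (M.mulVec ![X, Y, Z] 1) ^ 3 +
            (M.mulVec ![X, Y, Z] 2) ^ 3 =
          d * (M.mulVec ![X, Y, Z] 0 * M.mulVec ![X, Y, Z] 1 * M.mulVec ![X, Y, Z] 2) := by
  intro d M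
  have hw : ω ^ 2 + ω + 1 = 0 := by
    have h := hω.geom_sum_eq_zero (by norm_num)
    simp only [Finset.sum_range_succ, Finset.sum_range_zero] at h
    linear_combination h
  have hs : 2 * ω + 1 ≠ 0 := by
    intro h
    have h3 : (3 : ℂ) = 0 := by linear_combination 4 * hw - (2 * ω + 1) * h
    norm_num at h3
  obtain ⟨c, hcdef⟩ : ∃ c, c = a₁ + 3 * a₃ / ξ := ⟨_, rfl⟩
  have hcξ : c * ξ = a₁ * ξ + 3 * a₃ := by rw [hcdef]; field_simp
  have hc0 : c ≠ 0 := by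
    rintro rfl
    exact hden (by rw [← hcξ, zero_mul])
  have hdc : d * c = 3 * a₁ := by
    simp only [d]
    rw [← hcξ]
    field_simp
  have hc3 : c ^ 3 = a₁ ^ 3 - 27 * a₃ := by
    rw [hcdef]
    field_simp
    linear_combination 9 * a₃ * hdiv
  have hM : M = !![ω * a₁, 2 * ω + 1, (ω - 1) * a₃;
      -(ω + 1) * a₁, -(2 * ω + 1), (-ω - 2) * a₃; c, 0, 0] := by rw [hcdef]
  clear_value M d
  refine ⟨?_, fun X Y Z hE => ?_⟩
  · rw [Matrix.isUnit_iff_isUnit_det, isUnit_iff_ne_zero]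
    have hdet : M.det = -3 * (2 * ω + 1) * a₃ * c := by
      rw [hM, Matrix.det_fin_three]
      simp
      ring
    rw [hdet]
    exact mul_ne_zero (mul_ne_zero (mul_ne_zero (by norm_num) hs) ha₃) hc0
  · obtain ⟨U, hU⟩ : ∃ U, U = ω * a₁ * X + (2 * ω + 1) * Y + (ω - 1) * a₃ * Z := ⟨_, rfl⟩
    obtain ⟨V, hV⟩ : ∃ V, V = -(ω + 1) * a₁ * X + -(2 * ω + 1) * Y + (-ω - 2) * a₃ * Z :=
      ⟨_, rfl⟩
    have h0 : M.mulVec ![X, Y, Z] 0 = U := by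
      rw [hM, hU]; simp [Matrix.mulVec, dotProduct, Fin.sum_univ_three]
    have h1 : M.mulVec ![X, Y, Z] 1 = V := by
      rw [hM, hV]; simp [Matrix.mulVec, dotProduct, Fin.sum_univ_three]
    have h2 : M.mulVec ![X, Y, Z] 2 = c * X := by
      rw [hM]; simp [Matrix.mulVec, dotProduct, Fin.sum_univ_three]
    rw [h0, h1, h2]
    have f1 : U + V + a₁ * X = -3 * a₃ * Z := by rw [hU, hV]; ring
    have f2 : U + ω * V + ω ^ 2 * (a₁ * X) = -3 * ω ^ 2 * Y := by
      rw [hU, hV]; linear_combination (Y - a₃ * Z) * hw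
    have f3 : U + ω ^ 2 * V + ω * (a₁ * X) = 3 * ω * (Y + a₁ * X + a₃ * Z) := by
      rw [hU, hV]
      linear_combination (-ω * a₁ * X + (1 - 2 * ω) * Y - (ω + 1) * a₃ * Z) * hw
    have hfac := sum_cubes_factor hw U V (a₁ * X)
    rw [f1, f2, f3] at hfac
    have hω3 : ω ^ 3 = 1 := hω.pow_eq_one
    linear_combination hfac + X ^ 3 * hc3 - U * V * X * hdc + 27 * a₃ * hE +
      27 * a₃ * Y * Z * (Y + a₁ * X + a₃ * Z) * hω3
end

section
/- Let d ∈ ℂ and let W_d be the Weierstrass curve over ℂ given by Y² + (d/3)XY + ((d³−27)/3⁶)Y = X³ (coefficients a₁ = d/3, a₂ = 0, a₃ = (d³−27)/3⁶, a₄ = 0, a₆ = 0). Then the discriminant of W_d equals ((d³ − 27)/3⁶)³; hence W_d is an elliptic curve if and only if d³ ≠ 27, and in that case its j-invariant equals d³(d³ + 216)³/(d³ − 27)³. -/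
/-- The Weierstrass curve `Y² + (d/3)XY + ((d³−27)/3⁶)Y = X³` over `ℂ` has discriminant
`((d³ − 27)/3⁶)³`; it is an elliptic curve iff `d³ ≠ 27`, and in that case its j-invariant
`c₄³/Δ` equals `d³(d³ + 216)³/(d³ − 27)³`. -/
theorem hessian_discriminant_j (d : ℂ) :
    let W : WeierstrassCurve ℂ := ⟨d / 3, 0, (d ^ 3 - 27) / 3 ^ 6, 0, 0⟩
    W.Δ = ((d ^ 3 - 27) / 3 ^ 6) ^ 3 ∧
      (W.IsElliptic ↔ d ^ 3 ≠ 27) ∧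
      (d ^ 3 ≠ 27 → W.c₄ ^ 3 / W.Δ = d ^ 3 * (d ^ 3 + 216) ^ 3 / (d ^ 3 - 27) ^ 3) := by
  intro W
  -- With `a₂ = a₄ = a₆ = 0`, `Δ = a₃³(a₁³ - 27a₃)`, and here `a₁³ - 27a₃ = 1`.
  have hΔ : W.Δ = ((d ^ 3 - 27) / 3 ^ 6) ^ 3 := by
    simp only [W, WeierstrassCurve.Δ, WeierstrassCurve.b₂, WeierstrassCurve.b₄,
      WeierstrassCurve.b₆, WeierstrassCurve.b₈]
    ring
  have hc : W.c₄ = d * (d ^ 3 + 216) / 3 ^ 6 := by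
    simp only [W, WeierstrassCurve.c₄, WeierstrassCurve.b₂, WeierstrassCurve.b₄]
    ring
  refine ⟨hΔ, ?_, fun h => ?_⟩
  · rw [WeierstrassCurve.isElliptic_iff, hΔ, isUnit_iff_ne_zero]
    simp [sub_eq_zero]
  · have h' : d ^ 3 - 27 ≠ 0 := sub_ne_zero.mpr h
    rw [hΔ, hc]
    field_simp
end

section
/- Let J₀, J₁ ∈ ℤ[X] with deg J₁ > deg J₀, and let c ∈ ℤ be the leading coefficient of J₁. Let A be a commutative ring and x, y ∈ A such that the image of c is invertible in A and J₁(x) = y·J₀(x) (evaluating the integer polynomials at x in A). Then x is integral over the subring of A generated by c⁻¹ and y (the image of ℤ[c⁻¹, y]). -/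
open Polynomial

/-- Let `J₀, J₁ ∈ ℤ[X]` with `deg J₁ > deg J₀` and leading coefficient `c` of `J₁`. If in a
commutative ring `A` the image of `c` is invertible and `J₁(x) = y·J₀(x)`, then `x` is
integral over the subring of `A` generated by `c⁻¹` and `y`. -/
theorem integral_over_inv_leadingCoeff (J₀ J₁ : Polynomial ℤ)
    (hdeg : J₀.degree < J₁.degree) (A : Type*) [CommRing A] (x y : A)
    (hc : IsUnit ((Int.cast (J₁.leadingCoeff) : A)))
    (heq : Polynomial.aeval x J₁ = y * Polynomial.aeval x J₀) :
    IsIntegral (Subring.closure {(↑hc.unit⁻¹ : A), y}) x := by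
  set S := Subring.closure {(↑hc.unit⁻¹ : A), y} with hS
  let d : S := ⟨↑hc.unit⁻¹, Subring.subset_closure (by simp)⟩
  let y' : S := ⟨y, Subring.subset_closure (by simp)⟩
  have hd : d * (J₁.leadingCoeff : S) = 1 := by
    apply Subtype.ext
    push_cast
    exact hc.val_inv_mul
  -- The polynomial `c⁻¹ (J₁ - y J₀)` is monic because `deg J₀ < deg J₁`.
  refine ⟨C d * (J₁.map (Int.castRingHom S) - C y' * J₀.map (Int.castRingHom S)), ?_, ?_⟩
  · refine monic_of_natDegree_le_of_coeff_eq_one J₁.natDegree ?_ ?_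
    · refine (natDegree_C_mul_le _ _).trans ((natDegree_sub_le _ _).trans (max_le ?_ ?_))
      · exact natDegree_map_le
      · exact (natDegree_C_mul_le _ _).trans
          (natDegree_map_le.trans (natDegree_le_natDegree hdeg.le))
    · have h0 : J₀.coeff J₁.natDegree = 0 :=
        coeff_eq_zero_of_degree_lt (hdeg.trans_le degree_le_natDegree)
      simpa [h0] using hd
  · have h (p : ℤ[X]) : eval₂ (algebraMap S A) x (p.map (Int.castRingHom S)) = aeval x p := by
      rw [eval₂_map, aeval_def]
      congr 1
    have hy : algebraMap S A y' = y := rfl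
    rw [eval₂_mul, eval₂_sub, eval₂_mul, eval₂_C, eval₂_C, h, h, hy, heq, sub_self, mul_zero]
end
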